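/- arXiv:math/0411004 — 3 statements merged into one kernel-verified Lean document; each statement's English description precedes it below -/
import Mathlib

section
/- Let (M, d) be a metric space, C > 0, f : M → ℝ a C-Lipschitz function, E ⊆ M, and α > 1. Let 𝒜 be an at most countable family of nonempty bounded subsets of M covering E, for A ∈ 𝒜 let I(A) be the smallest closed interval in ℝ containing f(A), and define h(t) = Σ_{A ∈ 𝒜} (diam A)^{α−1} · χ_{I(A)}(t). Then for every t ∈ ℝ, the level set E_t = {x ∈ E : f(x) = t} satisfies μ^{α−1}(E_t) ≤ h(t); moreover, if ε > 0 and every A ∈ 𝒜 has diameter less than ε, then ℋ^{α−1}_ε(E_t) ≤ h(t) for every t ∈ ℝ. -/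
open ENNReal

/-- The `α`-dimensional Hausdorff content of a set `E` in a metric space: the infimum of
`∑ (diam A)^α` over all at most countable families of subsets covering `E` (with the
convention that an unbounded set has diameter `+∞`). -/
noncomputable def hausdorffContent {M : Type*} [MetricSpace M] (α : ℝ) (E : Set M) : ℝ≥0∞ :=
  ⨅ (A : ℕ → Set M) (_ : E ⊆ ⋃ n, A n), ∑' n, EMetric.diam (A n) ^ α

/-- `ℋ^α_ε(E)`: the infimum of `∑ (diam A)^α` over all at most countable coverings of `E` by
sets of diameter less than `ε` (equal to `+∞` if no such covering exists). -/
noncomputable def hausdorffPre {M : Type*} [MetricSpace M] (α ε : ℝ) (E : Set M) : ℝ≥0∞ :=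
  ⨅ (A : ℕ → Set M) (_ : E ⊆ ⋃ n, A n)
    (_ : ∀ n, EMetric.diam (A n) < ENNReal.ofReal ε), ∑' n, EMetric.diam (A n) ^ α

/-- with `h(t) = ∑ n, (diam (A n))^(α-1) * χ_{I(A n)}(t)` for an at most
countable cover `A` of `E` by nonempty bounded sets, one has `μ^(α-1)(E_t) ≤ h(t)` for every
`t`, where `E_t = {x ∈ E : f x = t}`; moreover, if every `A n` has diameter less than `ε`,
then `ℋ^(α-1)_ε(E_t) ≤ h(t)` for every `t`. -/
theorem content_levelSet_le_levelFunction {M : Type*} [MetricSpace M]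
    (C : ℝ) (hC : 0 < C) (f : M → ℝ) (hf : ∀ x y : M, |f x - f y| ≤ C * dist x y)
    (α : ℝ) (hα : 1 < α) (E : Set M) (A : ℕ → Set M)
    (hne : ∀ n, (A n).Nonempty) (hbd : ∀ n, Bornology.IsBounded (A n))
    (hcover : E ⊆ ⋃ n, A n) :
    (∀ t : ℝ, hausdorffContent (α - 1) {x ∈ E | f x = t} ≤
        ∑' n, EMetric.diam (A n) ^ (α - 1) *
          (Set.Icc (sInf (f '' A n)) (sSup (f '' A n))).indicator 1 t) ∧
      (∀ ε : ℝ, 0 < ε → (∀ n, EMetric.diam (A n) < ENNReal.ofReal ε) →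
        ∀ t : ℝ, hausdorffPre (α - 1) ε {x ∈ E | f x = t} ≤
          ∑' n, EMetric.diam (A n) ^ (α - 1) *
            (Set.Icc (sInf (f '' A n)) (sSup (f '' A n))).indicator 1 t) := by
  classical
  have hpos : 0 < α - 1 := by linarith
  have key : ∀ t : ℝ, ∃ B : ℕ → Set M, {x ∈ E | f x = t} ⊆ ⋃ n, B n ∧
      (∀ n, B n ⊆ A n) ∧
      ∑' n, EMetric.diam (B n) ^ (α - 1) = ∑' n, EMetric.diam (A n) ^ (α - 1) *
          (Set.Icc (sInf (f '' A n)) (sSup (f '' A n))).indicator 1 t := by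
    intro t
    refine ⟨fun n => if t ∈ Set.Icc (sInf (f '' A n)) (sSup (f '' A n)) then A n else ∅,
      ?_, ?_, ?_⟩
    · rintro x ⟨hxE, hxt⟩
      obtain ⟨n, hn⟩ := Set.mem_iUnion.1 (hcover hxE)
      refine Set.mem_iUnion.2 ⟨n, ?_⟩
      have hL : LipschitzWith (Real.toNNReal C) f := by
        refine LipschitzWith.of_dist_le_mul fun x y => ?_
        rw [Real.dist_eq, Real.coe_toNNReal C hC.le]
        exact hf x y
      have hb : Bornology.IsBounded (f '' A n) := hL.isBounded_image (hbd n)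
      have hmem : t ∈ Set.Icc (sInf (f '' A n)) (sSup (f '' A n)) := by
        have : t ∈ f '' A n := ⟨x, hn, hxt⟩
        exact ⟨csInf_le hb.bddBelow this, le_csSup hb.bddAbove this⟩
      simp only [if_pos hmem]
      exact hn
    · intro n
      dsimp only
      split_ifs
      · exact subset_rfl
      · exact Set.empty_subset _
    · refine tsum_congr fun n => ?_
      dsimp only
      split_ifs with h
      · rw [Set.indicator_of_mem h]; simp
      · rw [Set.indicator_of_notMem h]
        simp [EMetric.diam, hpos]
  refine ⟨fun t => ?_, fun ε _ hd t => ?_⟩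
  · obtain ⟨B, h1, -, h3⟩ := key t
    rw [← h3]
    exact iInf₂_le B h1
  · obtain ⟨B, h1, h2, h3⟩ := key t
    rw [← h3]
    exact (iInf₂_le B h1).trans
      (iInf_le _ fun n => (Metric.ediam_mono (h2 n)).trans_lt (hd n))
end

section
/- Let (M, d) be a metric space, C > 0, f : M → ℝ a C-Lipschitz function, α > 1, and E ⊆ M with μ^α(E) = 0. Then the set of t ∈ ℝ for which μ^{α−1}(E_t) > 0, where E_t = {x ∈ E : f(x) = t}, has Lebesgue measure zero in ℝ. -/
open ENNReal

/-- if `f : M → ℝ` is `C`-Lipschitz, `α > 1`, and `μ^α(E) = 0`, then the set of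
`t ∈ ℝ` with `μ^(α-1)({x ∈ E : f x = t}) > 0` has Lebesgue measure zero. -/
theorem volume_levelSet_positive_content_eq_zero {M : Type*} [MetricSpace M]
    (C : ℝ) (hC : 0 < C) (f : M → ℝ) (hf : ∀ x y : M, |f x - f y| ≤ C * dist x y)
    (α : ℝ) (hα : 1 < α) (E : Set M) (hE : hausdorffContent α E = 0) :
    MeasureTheory.volume {t : ℝ | 0 < hausdorffContent (α - 1) {x ∈ E | f x = t}} = 0 := by
  have hb : 0 ≤ α - 1 := by linarith
  have hb' : 0 < α - 1 := by linarith
  have hLip : LipschitzWith C.toNNReal f := by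
    apply LipschitzWith.of_dist_le_mul
    intro x y
    rw [Real.dist_eq, Real.coe_toNNReal C hC.le]
    exact hf x y
  have key : ∀ c : ℝ≥0∞, c ≠ 0 → c ≠ ⊤ →
      MeasureTheory.volume {t : ℝ | c ≤ hausdorffContent (α - 1) {x ∈ E | f x = t}} = 0 := by
    intro c hc hct
    have bound : ∀ A : ℕ → Set M, E ⊆ ⋃ n, A n →
        c * MeasureTheory.volume {t : ℝ | c ≤ hausdorffContent (α - 1) {x ∈ E | f x = t}} ≤
          C.toNNReal * ∑' n, EMetric.diam (A n) ^ α := by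
      intro A hA
      let g : ℕ → ℝ → ℝ≥0∞ := fun n =>
        (closure (f '' A n)).indicator (fun _ => EMetric.diam (A n) ^ (α - 1))
      have hgm : ∀ n, Measurable (g n) := fun n =>
        measurable_const.indicator isClosed_closure.measurableSet
      have hle : ∀ t, hausdorffContent (α - 1) {x ∈ E | f x = t} ≤ ∑' n, g n t := by
        intro t
        refine (iInf₂_le (fun n => A n ∩ {x | f x = t}) ?_).trans ?_
        · rintro x ⟨hx, hxt⟩
          obtain ⟨n, hn⟩ := Set.mem_iUnion.1 (hA hx)
          exact Set.mem_iUnion.2 ⟨n, hn, hxt⟩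
        · refine ENNReal.tsum_le_tsum fun n => ?_
          by_cases ht : t ∈ closure (f '' A n)
          · simp only [g, Set.indicator_of_mem ht]
            exact ENNReal.rpow_le_rpow (Metric.ediam_mono Set.inter_subset_left) hb
          · have : A n ∩ {x | f x = t} = ∅ := by
              ext x
              simp only [Set.mem_inter_iff, Set.mem_setOf_eq, Set.mem_empty_iff_false, iff_false]
              rintro ⟨hx, rfl⟩
              exact ht (subset_closure ⟨x, hx, rfl⟩)
            change Metric.ediam (A n ∩ {x | f x = t}) ^ (α - 1) ≤ g n t
            rw [this]
            simp [ENNReal.zero_rpow_of_pos hb']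
      calc _ ≤ c * MeasureTheory.volume {t : ℝ | c ≤ ∑' n, g n t} := by
            gcongr
            exact hle _
        _ ≤ ∫⁻ t, ∑' n, g n t :=
            MeasureTheory.mul_meas_ge_le_lintegral (Measurable.ennreal_tsum hgm) c
        _ = ∑' n, ∫⁻ t, g n t := MeasureTheory.lintegral_tsum fun n => (hgm n).aemeasurable
        _ ≤ ∑' n, C.toNNReal * EMetric.diam (A n) ^ α := by
            refine ENNReal.tsum_le_tsum fun n => ?_
            simp only [g]
            rw [MeasureTheory.lintegral_indicator_const isClosed_closure.measurableSet]
            have h1 : MeasureTheory.volume (closure (f '' A n)) ≤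
                C.toNNReal * EMetric.diam (A n) := by
              refine (Real.volume_le_diam _).trans ?_
              rw [Metric.ediam_closure]
              exact hLip.ediam_image_le _
            have h2 : EMetric.diam (A n) ^ α =
                EMetric.diam (A n) ^ (α - 1) * EMetric.diam (A n) := by
              conv_lhs => rw [show α = (α - 1) + 1 by ring]
              rw [ENNReal.rpow_add_of_nonneg _ _ hb zero_le_one, ENNReal.rpow_one]
            rw [h2, mul_left_comm]
            gcongr
        _ = _ := ENNReal.tsum_mul_left
    have h0 : c * MeasureTheory.volume
        {t : ℝ | c ≤ hausdorffContent (α - 1) {x ∈ E | f x = t}} ≤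
          C.toNNReal * hausdorffContent α E := by
      have hC0 : (C.toNNReal : ℝ≥0∞) ≠ 0 := by simpa using hC
      rw [mul_comm (C.toNNReal : ℝ≥0∞), ← ENNReal.div_le_iff_le_mul (Or.inl hC0) (Or.inl ENNReal.coe_ne_top)]
      refine le_iInf₂ fun A hA => ?_
      rw [ENNReal.div_le_iff_le_mul (Or.inl hC0) (Or.inl ENNReal.coe_ne_top), mul_comm _ (C.toNNReal : ℝ≥0∞)]
      exact bound A hA
    rw [hE, mul_zero, nonpos_iff_eq_zero, mul_eq_zero] at h0
    exact h0.resolve_left hc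
  refine MeasureTheory.measure_mono_null (t := ⋃ n : ℕ, {t : ℝ | ((n : ℝ≥0∞) + 1)⁻¹ ≤
    hausdorffContent (α - 1) {x ∈ E | f x = t}}) ?_ ?_
  · intro t ht
    obtain ⟨n, hn⟩ := ENNReal.exists_inv_nat_lt (ne_of_gt ht)
    refine Set.mem_iUnion.2 ⟨n, le_trans ?_ hn.le⟩
    exact ENNReal.inv_le_inv.2 le_self_add
  · refine MeasureTheory.measure_iUnion_null fun n => key _ ?_ ?_
    · simp
    · simp
end

section
/- Let (M, d) be a metric space, C > 0, f : M → ℝ a C-Lipschitz function, α > 1, and E ⊆ M with ℋ^α(E) < ∞. Then there is a nonnegative measurable function ψ on ℝ such that ℋ^{α−1}(E_t) ≤ ψ(t) for every t ∈ ℝ, where E_t = {x ∈ E : f(x) = t}, and ∫_ℝ ψ(t) dt ≤ C · ℋ^α(E). -/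
open ENNReal

/-- The `α`-dimensional Hausdorff measure `ℋ^α(E)`: the supremum of `ℋ^α_ε(E)` over `ε > 0`. -/
noncomputable def hausdorffMeas {M : Type*} [MetricSpace M] (α : ℝ) (E : Set M) : ℝ≥0∞ :=
  ⨆ (ε : ℝ) (_ : 0 < ε), hausdorffPre α ε E

open MeasureTheory Filter Topology in
theorem exists_measurable_bound_on_levelSets {M : Type*} [MetricSpace M]
    (C : ℝ) (hC : 0 < C) (f : M → ℝ) (hf : ∀ x y : M, |f x - f y| ≤ C * dist x y)
    (α : ℝ) (hα : 1 < α) (E : Set M) (hE : hausdorffMeas α E < ⊤) :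
    ∃ ψ : ℝ → ℝ≥0∞, Measurable ψ ∧
      (∀ t : ℝ, hausdorffMeas (α - 1) {x ∈ E | f x = t} ≤ ψ t) ∧
      ∫⁻ t, ψ t ≤ ENNReal.ofReal C * hausdorffMeas α E := by
  classical
  have hempty : EMetric.diam (∅ : Set M) = 0 := Metric.ediam_empty
  set H := hausdorffMeas α E with hH
  have hLip : LipschitzWith (Real.toNNReal C) f := by
    apply LipschitzWith.of_dist_le_mul
    intro x y
    rw [Real.coe_toNNReal C hC.le, Real.dist_eq]
    exact hf x y
  have key : ∀ k : ℕ, ∃ A : ℕ → Set M, E ⊆ (⋃ n, A n) ∧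
      (∀ n, EMetric.diam (A n) < ENNReal.ofReal (1 / ((k : ℝ) + 1))) ∧
      ∑' n, EMetric.diam (A n) ^ α < H + ENNReal.ofReal (1 / ((k : ℝ) + 1)) := by
    intro k
    have hpos : (0 : ℝ) < 1 / ((k : ℝ) + 1) := by positivity
    have h1 : hausdorffPre α (1 / ((k : ℝ) + 1)) E ≤ H :=
      le_iSup₂ (f := fun (ε : ℝ) (_ : 0 < ε) => hausdorffPre α ε E) _ hpos
    have h2 : hausdorffPre α (1 / ((k : ℝ) + 1)) E < H + ENNReal.ofReal (1 / ((k : ℝ) + 1)) :=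
      h1.trans_lt (ENNReal.lt_add_right hE.ne (by simpa using hpos))
    unfold hausdorffPre at h2
    simp only [iInf_lt_iff] at h2
    obtain ⟨A, h, h', h''⟩ := h2
    exact ⟨A, h, h', h''⟩
  choose A hcov hdiam hsum using key
  let φ : ℕ → ℝ → ℝ≥0∞ := fun k t =>
    ∑' n, (closure (f '' A k n)).indicator (fun _ => EMetric.diam (A k n) ^ (α - 1)) t
  have hmeas : ∀ k, Measurable (φ k) := fun k =>
    Measurable.ennreal_tsum fun n => measurable_const.indicator isClosed_closure.measurableSet
  have hint : ∀ k, ∫⁻ t, φ k t ≤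
      ENNReal.ofReal C * (H + ENNReal.ofReal (1 / ((k : ℝ) + 1))) := by
    intro k
    have e1 : ∫⁻ t, φ k t = ∑' n, EMetric.diam (A k n) ^ (α - 1) *
        volume (closure (f '' A k n)) := by
      simp only [φ]
      rw [lintegral_tsum]
      · congr 1; ext n
        rw [lintegral_indicator_const isClosed_closure.measurableSet]
      · intro n
        exact (measurable_const.indicator isClosed_closure.measurableSet).aemeasurable
    rw [e1]
    calc _ ≤ ∑' n, ENNReal.ofReal C * EMetric.diam (A k n) ^ α := by
          refine ENNReal.tsum_le_tsum fun n => ?_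
          have hv : volume (closure (f '' A k n)) ≤ ENNReal.ofReal C * EMetric.diam (A k n) := by
            refine (Real.volume_le_diam _).trans ?_
            rw [Metric.ediam_closure]
            exact hLip.ediam_image_le _
          refine (mul_le_mul_right hv _).trans (le_of_eq ?_)
          have hp : EMetric.diam (A k n) ^ α =
              EMetric.diam (A k n) ^ (α - 1) * EMetric.diam (A k n) := by
            conv_rhs => rw [← ENNReal.rpow_one (EMetric.diam (A k n)), ← ENNReal.rpow_mul, one_mul]
            rw [← ENNReal.rpow_add_of_nonneg _ _ (by linarith) zero_le_one]
            congr 1; ring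
          rw [hp]; ring
      _ = ENNReal.ofReal C * ∑' n, EMetric.diam (A k n) ^ α := ENNReal.tsum_mul_left
      _ ≤ _ := by gcongr; exact (hsum k).le
  refine ⟨fun t => liminf (fun k => φ k t) atTop, Measurable.liminf hmeas, ?_, ?_⟩
  · intro t
    refine iSup₂_le fun ε hε => ?_
    refine le_liminf_of_le (by isBoundedDefault) ?_
    have hev : ∀ᶠ k : ℕ in atTop, 1 / ((k : ℝ) + 1) < ε :=
      (tendsto_one_div_add_atTop_nhds_zero_nat (𝕜 := ℝ)).eventually (gt_mem_nhds hε)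
    filter_upwards [hev] with k hk
    unfold hausdorffPre
    refine iInf_le_of_le (fun n => if t ∈ closure (f '' A k n) then A k n else ∅) ?_
    refine iInf_le_of_le ?_ (iInf_le_of_le ?_ ?_)
    · rintro x ⟨hx, rfl⟩
      obtain ⟨n, hn⟩ := Set.mem_iUnion.1 (hcov k hx)
      refine Set.mem_iUnion.2 ⟨n, ?_⟩
      rw [if_pos (subset_closure (Set.mem_image_of_mem f hn))]
      exact hn
    · intro n
      dsimp only
      split_ifs
      · exact (hdiam k n).trans_le (ENNReal.ofReal_le_ofReal hk.le)
      · rw [hempty]; simpa using hε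
    · refine ENNReal.tsum_le_tsum fun n => ?_
      by_cases h : t ∈ closure (f '' A k n)
      · simp [h]
      · simp [h, hα, hempty]
  · refine (lintegral_liminf_le hmeas).trans ?_
    refine (liminf_le_liminf (Eventually.of_forall hint)).trans (le_of_eq ?_)
    apply Tendsto.liminf_eq
    refine ENNReal.Tendsto.const_mul ?_ (Or.inr ENNReal.ofReal_ne_top)
    have h0 := ENNReal.tendsto_ofReal (tendsto_one_div_add_atTop_nhds_zero_nat (𝕜 := ℝ))
    simpa using (tendsto_const_nhds (x := H)).add h0
end
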